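/- Let M and N be real symmetric 2×2 matrices with det M < 0 (so M has signature (1,1)), let Ω = iM + N with (1,1)-entry ω₁₁, and let c₁, c₂ ∈ ℝ² with c₁ᵀMc₁ < 0 and c₂ᵀMc₂ < 0 lie in the same connected component of the cone {c ∈ ℝ² : cᵀMc < 0}. Let p₁ ∈ ℝ and σ ∈ ℝ with σ > 1/2. Then ∫₀^∞ Σ_{n∈ℤ} |ρ_M^{c₁,c₂}((n√t, 0)ᵀ) · e(½ω₁₁n²t + p₁n)| · t^{σ-1} dt < ∞. -/

import Mathlib

open Matrix

/-- `e(z) := exp(2πiz)`. -/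
noncomputable def ec (z : ℂ) : ℂ := Complex.exp (2 * (Real.pi : ℂ) * Complex.I * z)

/-- `E(z) := ∫₀^z e^{-πu²} du`, realised as `∫₀¹ z·exp(-π t² z²) dt`. -/
noncomputable def E (z : ℂ) : ℂ :=
  ∫ t in (0 : ℝ)..1, z * Complex.exp (-(Real.pi : ℂ) * (t : ℂ) ^ 2 * z ^ 2)

/-- `ρ_M^c(v) := E(cᵀMv / √(-½cᵀMc))` for a real symmetric 2×2 matrix `M`,
`c ∈ ℝ²` with `cᵀMc < 0`, and `v ∈ ℂ²`. -/
noncomputable def rho (M : Matrix (Fin 2) (Fin 2) ℝ) (c : Fin 2 → ℝ) (v : Fin 2 → ℂ) : ℂ :=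
  E (((fun i => (c i : ℂ)) ⬝ᵥ (M.map Complex.ofReal).mulVec v) /
      (Real.sqrt (-(1 / 2) * (c ⬝ᵥ M.mulVec c)) : ℂ))

open MeasureTheory Set

/-- On the real line, `E` is the Gaussian integral from `0`. -/
lemma E_ofReal (x : ℝ) :
    E x = ((∫ u in (0 : ℝ)..x, Real.exp (-Real.pi * u ^ 2) : ℝ) : ℂ) := by
  have h := intervalIntegral.mul_integral_comp_mul_left (a := 0) (b := 1) (c := x)
    (f := fun u => Real.exp (-Real.pi * u ^ 2))
  rw [mul_zero, mul_one] at h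
  rw [← h, E, intervalIntegral.integral_const_mul, Complex.ofReal_mul,
    ← intervalIntegral.integral_ofReal]
  congr 2
  ext t
  push_cast
  ring_nf

/-- A mean value bound: if `u ^ 2 ≥ K` for all `u` between `a` and `b`, the increment of `E`
over that interval is at most `|b - a| * exp (-π * K)`. -/
lemma norm_E_sub_E_le {a b K : ℝ} (hK : ∀ u ∈ uIcc a b, K ≤ u ^ 2) :
    ‖E b - E a‖ ≤ |b - a| * Real.exp (-Real.pi * K) := by
  have hint : ∀ x y : ℝ,
      IntervalIntegrable (fun u : ℝ => Real.exp (-Real.pi * u ^ 2)) volume x y := fun x y =>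
    (by fun_prop : Continuous fun u : ℝ => Real.exp (-Real.pi * u ^ 2)).intervalIntegrable x y
  rw [E_ofReal, E_ofReal, ← Complex.ofReal_sub, Complex.norm_real,
    intervalIntegral.integral_interval_sub_left (hint _ _) (hint _ _), mul_comm]
  refine intervalIntegral.norm_integral_le_of_norm_le_const fun u hu => ?_
  rw [Real.norm_eq_abs, Real.abs_exp]
  have := hK u (uIoc_subset_uIcc hu)
  exact Real.exp_le_exp.2 (by nlinarith [Real.pi_pos])

/-- Between two numbers of the same sign, squares are bounded below by the smaller square. -/
lemma le_sq_of_mem_uIcc {a b K u : ℝ} (hab : 0 ≤ a * b) (ha : K ≤ a ^ 2) (hb : K ≤ b ^ 2)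
    (hu : u ∈ uIcc a b) : K ≤ u ^ 2 := by
  rcases mul_nonneg_iff.1 hab with ⟨h₁, h₂⟩ | ⟨h₁, h₂⟩ <;>
    rcases mem_uIcc.1 hu with ⟨h₃, h₄⟩ | ⟨h₃, h₄⟩ <;> nlinarith

/-- The argument of `E` in `rho M c ![x, 0]`, divided by `x`. -/
noncomputable def rhoSlope (M : Matrix (Fin 2) (Fin 2) ℝ) (c : Fin 2 → ℝ) : ℝ :=
  (c 0 * M 0 0 + c 1 * M 1 0) / Real.sqrt (-(1 / 2) * (c ⬝ᵥ M.mulVec c))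

lemma rho_axis (M : Matrix (Fin 2) (Fin 2) ℝ) (c : Fin 2 → ℝ) (x : ℝ) :
    rho M c ![(x : ℂ), 0] = E ((rhoSlope M c * x : ℝ) : ℂ) := by
  rw [rho, rhoSlope]
  congr 1
  simp only [dotProduct, mulVec, Fin.sum_univ_two, Matrix.map_apply, cons_val_zero, cons_val_one,
    mul_zero, add_zero]
  push_cast
  ring

/-- The Gram determinant identity for `c` and the first basis vector. -/
lemma gram_axis {M : Matrix (Fin 2) (Fin 2) ℝ} (hM : M.IsSymm) (c : Fin 2 → ℝ) :
    (c 0 * M 0 0 + c 1 * M 1 0) ^ 2 = (c ⬝ᵥ M.mulVec c) * M 0 0 - M.det * c 1 ^ 2 := by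
  have h : M 0 1 = M 1 0 := hM.apply 1 0
  simp only [dotProduct, mulVec, Fin.sum_univ_two, det_fin_two, h]
  ring

lemma rhoSlope_sq {M : Matrix (Fin 2) (Fin 2) ℝ} {c : Fin 2 → ℝ} (hc : c ⬝ᵥ M.mulVec c < 0) :
    rhoSlope M c ^ 2 = (c 0 * M 0 0 + c 1 * M 1 0) ^ 2 / (-(1 / 2) * (c ⬝ᵥ M.mulVec c)) := by
  rw [rhoSlope, div_pow, Real.sq_sqrt (by linarith)]

lemma axis_pairing_sq_pos {M : Matrix (Fin 2) (Fin 2) ℝ} (hM : M.IsSymm) (hdet : M.det < 0)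
    (hm : M 0 0 ≤ 0) {c : Fin 2 → ℝ} (hc : c ⬝ᵥ M.mulVec c < 0) :
    0 < (c 0 * M 0 0 + c 1 * M 1 0) ^ 2 := by
  rw [gram_axis hM]
  have h₁ : 0 ≤ -M.det * c 1 ^ 2 := by nlinarith [sq_nonneg (c 1)]
  rcases hm.lt_or_eq with h | h
  · nlinarith [mul_pos_of_neg_of_neg hc h]
  · have h₂ : c 1 ≠ 0 := by
      intro h₀
      simp [dotProduct, mulVec, Fin.sum_univ_two, h, h₀] at hc
    have h₃ : 0 < c 1 ^ 2 := by positivity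
    rw [h]
    nlinarith

lemma neg_lt_rhoSlope_sq {M : Matrix (Fin 2) (Fin 2) ℝ} (hM : M.IsSymm) (hdet : M.det < 0)
    (hm : M 0 0 ≤ 0) {c : Fin 2 → ℝ} (hc : c ⬝ᵥ M.mulVec c < 0) :
    -M 0 0 < rhoSlope M c ^ 2 := by
  have hpos := axis_pairing_sq_pos hM hdet hm hc
  rw [rhoSlope_sq hc, lt_div_iff₀ (by linarith)]
  have h₁ := gram_axis hM c
  have h₂ : 0 ≤ -M.det * c 1 ^ 2 := by nlinarith [sq_nonneg (c 1)]
  have h₃ := mul_nonneg_of_nonpos_of_nonpos hc.le hm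
  nlinarith

/-- Slopes of vectors in the same component of the negative cone have the same sign. -/
lemma rhoSlope_mul_nonneg {M : Matrix (Fin 2) (Fin 2) ℝ} (hM : M.IsSymm) (hdet : M.det < 0)
    (hm : M 0 0 ≤ 0) {c₁ c₂ : Fin 2 → ℝ} (hc₁ : c₁ ⬝ᵥ M.mulVec c₁ < 0)
    (hconn : c₂ ∈ connectedComponentIn {x : Fin 2 → ℝ | x ⬝ᵥ M.mulVec x < 0} c₁) :
    0 ≤ rhoSlope M c₁ * rhoSlope M c₂ := by
  let S := connectedComponentIn {x : Fin 2 → ℝ | x ⬝ᵥ M.mulVec x < 0} c₁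
  let B : (Fin 2 → ℝ) → ℝ := fun c => c 0 * M 0 0 + c 1 * M 1 0
  have hS : IsPreconnected (image B S) :=
    isPreconnected_connectedComponentIn.image B (by fun_prop)
  have h₁ : B c₁ ∈ image B S := mem_image_of_mem B (mem_connectedComponentIn hc₁)
  have h₂ : B c₂ ∈ image B S := mem_image_of_mem B hconn
  have h₀ : (0 : ℝ) ∉ image B S := by
    rintro ⟨c, hc, hB⟩
    have hneg : c ⬝ᵥ M.mulVec c < 0 :=
      connectedComponentIn_subset {x : Fin 2 → ℝ | x ⬝ᵥ M.mulVec x < 0} c₁ hc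
    have := axis_pairing_sq_pos hM hdet hm hneg
    change 0 < B c ^ 2 at this
    simp [hB] at this
  have hB : 0 ≤ B c₁ * B c₂ := by
    by_contra! hneg
    rcases mul_neg_iff.1 hneg with ⟨h₃, h₄⟩ | ⟨h₃, h₄⟩
    · exact h₀ (hS.Icc_subset h₂ h₁ ⟨h₄.le, h₃.le⟩)
    · exact h₀ (hS.Icc_subset h₁ h₂ ⟨h₃.le, h₄.le⟩)
  rw [rhoSlope, rhoSlope, div_mul_div_comm]
  exact div_nonneg hB (by positivity)

lemma norm_ec (z : ℂ) : ‖ec z‖ = Real.exp (-2 * Real.pi * z.im) := by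
  rw [ec, Complex.norm_exp]
  simp

/-- Gaussian decay of the theta coefficients along the first axis. -/
lemma exists_gaussian_bound {M : Matrix (Fin 2) (Fin 2) ℝ} (hM : M.IsSymm) (hdet : M.det < 0)
    {c₁ c₂ : Fin 2 → ℝ} (hc₁ : c₁ ⬝ᵥ M.mulVec c₁ < 0) (hc₂ : c₂ ⬝ᵥ M.mulVec c₂ < 0)
    (hconn : c₂ ∈ connectedComponentIn {x : Fin 2 → ℝ | x ⬝ᵥ M.mulVec x < 0} c₁) :
    ∃ δ C : ℝ, 0 < δ ∧ 0 ≤ C ∧ ∀ x : ℝ,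
      ‖rho M c₂ ![(x : ℂ), 0] - rho M c₁ ![(x : ℂ), 0]‖ * Real.exp (-Real.pi * M 0 0 * x ^ 2) ≤
        C * |x| * Real.exp (-(δ * x ^ 2)) := by
  obtain ⟨K, hK, hbound⟩ : ∃ K : ℝ, 0 < M 0 0 + K ∧
      ∀ x : ℝ, ∀ u ∈ uIcc (rhoSlope M c₁ * x) (rhoSlope M c₂ * x), K * x ^ 2 ≤ u ^ 2 := by
    rcases lt_or_ge 0 (M 0 0) with hm | hm
    · exact ⟨0, by linarith, fun x u _ => by nlinarith [sq_nonneg u]⟩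
    · have h₁ := neg_lt_rhoSlope_sq hM hdet hm hc₁
      have h₂ := neg_lt_rhoSlope_sq hM hdet hm hc₂
      refine ⟨min (rhoSlope M c₁ ^ 2) (rhoSlope M c₂ ^ 2), ?_, fun x u hu => ?_⟩
      · linarith [lt_min h₁ h₂]
      · refine le_sq_of_mem_uIcc ?_ ?_ ?_ hu
        · rw [mul_mul_mul_comm]
          exact mul_nonneg (rhoSlope_mul_nonneg hM hdet hm hc₁ hconn) (mul_self_nonneg x)
        · rw [mul_pow]
          gcongr
          exact min_le_left _ _
        · rw [mul_pow]
          gcongr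
          exact min_le_right _ _
  refine ⟨Real.pi * (M 0 0 + K), |rhoSlope M c₂ - rhoSlope M c₁|, by positivity,
    abs_nonneg _, fun x => ?_⟩
  rw [rho_axis, rho_axis, ← abs_mul, sub_mul]
  calc _ ≤ |rhoSlope M c₂ * x - rhoSlope M c₁ * x| * Real.exp (-Real.pi * (K * x ^ 2)) *
        Real.exp (-Real.pi * M 0 0 * x ^ 2) := by
        gcongr
        exact norm_E_sub_E_le (hbound x)
    _ = _ := by
        rw [mul_assoc, ← Real.exp_add]
        ring_nf

/-- The Mellin transform of `∑ₙ |n| √t exp (-δ n² t)` converges absolutely for `σ > 1 / 2`. -/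
lemma lintegral_tsum_gaussian_lt_top {δ σ : ℝ} (hδ : 0 < δ) (hσ : 1 / 2 < σ) :
    ∫⁻ t in Ioi (0 : ℝ), ∑' n : ℤ, ENNReal.ofReal
      (|(n : ℝ)| * (t ^ (σ + 1 / 2 - 1) * Real.exp (-(δ * (n : ℝ) ^ 2 * t)))) < ⊤ := by
  rw [lintegral_tsum fun n => by fun_prop]
  have hterm : ∀ n : ℤ, ∫⁻ t in Ioi (0 : ℝ), ENNReal.ofReal
      (|(n : ℝ)| * (t ^ (σ + 1 / 2 - 1) * Real.exp (-(δ * (n : ℝ) ^ 2 * t)))) =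
      ENNReal.ofReal ((1 / δ) ^ (σ + 1 / 2) * Real.Gamma (σ + 1 / 2) *
        |(n : ℝ)| ^ (-(2 * σ))) := by
    intro n
    rcases eq_or_ne n 0 with rfl | hn
    · simp [Real.zero_rpow (by linarith : -(2 * σ) ≠ 0)]
    have hn' : (n : ℝ) ≠ 0 := by exact_mod_cast hn
    have hr : 0 < δ * (n : ℝ) ^ 2 := by positivity
    have hint := integrableOn_rpow_mul_exp_neg_mul_rpow (p := 1) (s := σ + 1 / 2 - 1)
      (by linarith) one_pos hr
    simp only [Real.rpow_one, neg_mul (δ * (n : ℝ) ^ 2)] at hint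
    rw [← ofReal_integral_eq_lintegral_ofReal (hint.const_mul _), integral_const_mul,
      Real.integral_rpow_mul_exp_neg_mul_Ioi (by linarith) hr]
    · congr 1
      have habs : 0 < |(n : ℝ)| := abs_pos.2 hn'
      have hsq : (1 / (δ * (n : ℝ) ^ 2)) = 1 / δ * |(n : ℝ)| ^ (-2 : ℝ) := by
        rw [Real.rpow_neg habs.le, Real.rpow_two, sq_abs]
        field_simp
      rw [hsq, Real.mul_rpow (by positivity) (by positivity), ← Real.rpow_mul habs.le,
        show -(2 * σ) = 1 + -2 * (σ + 1 / 2) by ring, Real.rpow_add habs, Real.rpow_one]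
      ring
    · filter_upwards [ae_restrict_mem measurableSet_Ioi] with t ht
      have : (0 : ℝ) < t := ht
      positivity
  simp_rw [hterm]
  exact ((Real.summable_abs_int_rpow (by linarith)).mul_left _).tsum_ofReal_lt_top

/-- **Absolute convergence of the Mellin transform of the `n₂ = 0` part.**
With `M` of signature `(1,1)`, `Ω = iM + N`, `c₁, c₂` in the same connected component of
the negative cone of `M`, `p₁ ∈ ℝ` and `σ > 1/2`:
`∫₀^∞ Σ_{n∈ℤ} |ρ_M^{c₁,c₂}((n√t, 0)ᵀ)·e(½ω₁₁n²t + p₁n)|·t^{σ-1} dt < ∞`. -/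
theorem stmt_8 (M N : Matrix (Fin 2) (Fin 2) ℝ) (hMsymm : M.IsSymm) (hNsymm : N.IsSymm)
    (hdet : M.det < 0)
    (Ω : Matrix (Fin 2) (Fin 2) ℂ)
    (hΩ : Ω = Complex.I • M.map Complex.ofReal + N.map Complex.ofReal)
    (c₁ c₂ : Fin 2 → ℝ) (hc₁ : c₁ ⬝ᵥ M.mulVec c₁ < 0) (hc₂ : c₂ ⬝ᵥ M.mulVec c₂ < 0)
    (hconn : c₂ ∈ connectedComponentIn {x : Fin 2 → ℝ | x ⬝ᵥ M.mulVec x < 0} c₁)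
    (p₁ σ : ℝ) (hσ : 1 / 2 < σ) :
    ∫⁻ t in Set.Ioi (0 : ℝ),
        (∑' n : ℤ, ENNReal.ofReal (norm
            ((rho M c₂ ![(n : ℂ) * (Real.sqrt t : ℂ), 0] -
                rho M c₁ ![(n : ℂ) * (Real.sqrt t : ℂ), 0]) *
              ec ((1 / 2) * Ω 0 0 * (n : ℂ) ^ 2 * (t : ℂ) + (p₁ : ℂ) * (n : ℂ))))) *
          ENNReal.ofReal (t ^ (σ - 1)) < ⊤ := by
  obtain ⟨δ, C, hδ, hC, hbound⟩ := exists_gaussian_bound hMsymm hdet hc₁ hc₂ hconn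
  refine lt_of_le_of_lt (b := ∫⁻ t in Ioi (0 : ℝ), ENNReal.ofReal C * ∑' n : ℤ, ENNReal.ofReal
      (|(n : ℝ)| * (t ^ (σ + 1 / 2 - 1) * Real.exp (-(δ * (n : ℝ) ^ 2 * t))))) ?_ ?_
  · refine setLIntegral_mono' measurableSet_Ioi fun t ht => ?_
    have ht₀ : (0 : ℝ) < t := ht
    rw [← ENNReal.tsum_mul_right, ← ENNReal.tsum_mul_left]
    refine ENNReal.tsum_le_tsum fun n => ?_
    rw [← ENNReal.ofReal_mul (norm_nonneg _), ← ENNReal.ofReal_mul hC]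
    refine ENNReal.ofReal_le_ofReal ?_
    have hx : ((n * Real.sqrt t : ℝ)) ^ 2 = (n : ℝ) ^ 2 * t := by
      rw [mul_pow, Real.sq_sqrt ht₀.le]
    have him : ((1 / 2) * Ω 0 0 * (n : ℂ) ^ 2 * (t : ℂ) + (p₁ : ℂ) * (n : ℂ)).im =
        1 / 2 * M 0 0 * ((n : ℝ) ^ 2 * t) := by
      have h : (1 / 2) * Ω 0 0 * (n : ℂ) ^ 2 * (t : ℂ) + (p₁ : ℂ) * (n : ℂ) =
          ((1 / 2 * N 0 0 * n ^ 2 * t + p₁ * n : ℝ) : ℂ) +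
            ((1 / 2 * M 0 0 * ((n : ℝ) ^ 2 * t) : ℝ) : ℂ) * Complex.I := by
        simp only [hΩ, Matrix.add_apply, Matrix.smul_apply, Matrix.map_apply, smul_eq_mul]
        push_cast
        ring
      rw [h, Complex.add_im, Complex.ofReal_im, Complex.im_ofReal_mul, Complex.I_im, mul_one, zero_add]
    have hb := hbound (n * Real.sqrt t)
    rw [hx, abs_mul, abs_of_nonneg (Real.sqrt_nonneg t)] at hb
    push_cast at hb
    rw [norm_mul, norm_ec, him]
    calc _ = ‖rho M c₂ ![(n : ℂ) * (Real.sqrt t : ℂ), 0] -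
            rho M c₁ ![(n : ℂ) * (Real.sqrt t : ℂ), 0]‖ *
            Real.exp (-Real.pi * M 0 0 * ((n : ℝ) ^ 2 * t)) * t ^ (σ - 1) := by
          ring_nf
      _ ≤ C * (|(n : ℝ)| * Real.sqrt t) * Real.exp (-(δ * ((n : ℝ) ^ 2 * t))) * t ^ (σ - 1) := by
          gcongr
      _ = _ := by
          rw [show σ + 1 / 2 - 1 = 1 / 2 + (σ - 1) by ring, Real.rpow_add ht₀,
            ← Real.sqrt_eq_rpow]
          ring_nf
  · rw [lintegral_const_mul' _ _ ENNReal.ofReal_ne_top]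
    exact ENNReal.mul_lt_top ENNReal.ofReal_lt_top (lintegral_tsum_gaussian_lt_top hδ hσ)
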